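/- For every fixed t > 0, the difference between the x-derivative of θ and the x-derivative of K, namely J(x,t) = θ_x(x,t) − K_x(x,t) = Σ_{n=1}^∞ [ ∂_x K(x + 2nL, t) + ∂_x K(x − 2nL, t) ], tends to 0 as x → 0. -/

import Mathlib

/-!
The kernel `K` is even in `x`, so `∂ₓK` is odd and each summand
`∂ₓK(x + c) + ∂ₓK(x - c)` of `J`, with `c = 2(n+1)L`, vanishes at `x = 0`. Away from the origin
`K` may be differentiated under the integral sign (`hasDerivAt_Kfun`): for `0 < y ≤ t` the
derivative of the Gaussian factor satisfies `|∂_z e^{-z²/(4εy) - ay}| ≤ 16εt/|z|³`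
(`abs_gaussDeriv_le`), and the remaining weight, a continuous function times `(t-y)^{-1/2}`, is
integrable. The same bound shows that `∂ₓK` is continuous away from `0` (`continuousAt_dK`) and that
`|∂ₓK(z)| ≤ C/|z|³` (`abs_dK_le`). For `|x| < L` the `n`-th summand of `J` is therefore at most
`2C/((n+1)L)³`, and dominated convergence for series gives `J(x,t) → J(0,t) = 0`.
-/

open Real MeasureTheory Set Filter Topology intervalIntegral

/-- Bessel function of the first kind of order 1, via its power series. -/
noncomputable def J1 (z : ℝ) : ℝ :=
  ∑' k : ℕ, ((-1 : ℝ) ^ k / ((Nat.factorial k : ℝ) * (Nat.factorial (k + 1) : ℝ)))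
      * (z / 2) ^ (2 * k + 1)

/-- The fundamental solution `K(x,t)` of the integro-differential operator. -/
noncomputable def Kfun (ε a b β : ℝ) (x t : ℝ) : ℝ :=
  (1 / (2 * Real.sqrt (Real.pi * ε))) *
    (Real.exp (-(|x| / Real.sqrt ε) ^ 2 / (4 * t) - a * t) / Real.sqrt t
      - b * ∫ y in (0:ℝ)..t,
          (Real.exp (-(|x| / Real.sqrt ε) ^ 2 / (4 * y) - a * y) / Real.sqrt (t - y))
            * Real.exp (-β * (t - y)) * J1 (2 * Real.sqrt (b * y * (t - y))))

/-- The theta function `θ(x,t) = Σ_{n ∈ ℤ} K(x + 2nL, t)`. -/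
noncomputable def theta (ε a b β L : ℝ) (x t : ℝ) : ℝ :=
  ∑' n : ℤ, Kfun ε a b β (x + 2 * (n : ℝ) * L) t

/-- The partial derivative of `θ` with respect to `x`. -/
noncomputable def thetaX (ε a b β L : ℝ) (x t : ℝ) : ℝ :=
  deriv (fun y : ℝ => theta ε a b β L y t) x

/-- On `[-R, R]` the defining power series is dominated by the exponential series of `(R/2)²`. -/
lemma continuous_J1 : Continuous J1 := by
  have key : ∀ R : ℝ, 0 < R → ContinuousOn J1 (Icc (-R) R) := by
    intro R hR
    unfold J1
    refine continuousOn_tsum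
      (u := fun k : ℕ => ((R / 2) ^ 2) ^ k / (Nat.factorial k : ℝ) * (R / 2)) ?_ ?_ ?_
    · intro k
      fun_prop
    · exact (Real.summable_pow_div_factorial _).mul_right _
    · intro k z hz
      have hz' : |z / 2| ≤ R / 2 := by
        rw [abs_div, abs_two]
        have := abs_le.mpr hz
        linarith
      rw [norm_mul, norm_div, norm_pow, norm_neg, norm_one, one_pow, norm_pow, Real.norm_eq_abs,
        Real.norm_eq_abs, ← pow_mul]
      have h1 : (1 : ℝ) ≤ Nat.factorial (k + 1) := by
        exact_mod_cast Nat.factorial_pos _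
      have h0 : (0 : ℝ) < Nat.factorial k := by positivity
      rw [abs_of_pos (by positivity)]
      calc 1 / ((Nat.factorial k : ℝ) * Nat.factorial (k + 1)) * |z / 2| ^ (2 * k + 1)
          ≤ 1 / (Nat.factorial k : ℝ) * (R / 2) ^ (2 * k + 1) := by
            gcongr
            exact le_mul_of_one_le_right h0.le h1
        _ = (R / 2) ^ (2 * k) / (Nat.factorial k : ℝ) * (R / 2) := by ring
  rw [continuous_iff_continuousAt]
  intro z
  refine (key (|z| + 1) (by positivity)).continuousAt (Icc_mem_nhds ?_ ?_)
  · linarith [neg_abs_le z]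
  · linarith [le_abs_self z]

/-- The weight `e^{-β(t-y)} J₁(2√(by(t-y))) / √(t-y)` multiplying the Gaussian in the memory term
of `K`. -/
noncomputable def memWeight (b β t y : ℝ) : ℝ :=
  Real.exp (-β * (t - y)) * J1 (2 * Real.sqrt (b * y * (t - y))) * (t - y) ^ (-(1 / 2) : ℝ)

lemma intervalIntegrable_memWeight (b β t : ℝ) :
    IntervalIntegrable (memWeight b β t) volume 0 t := by
  unfold memWeight
  have h : IntervalIntegrable (fun y : ℝ => (t - y) ^ (-(1 / 2) : ℝ)) volume 0 t := by
    have := (intervalIntegral.intervalIntegrable_rpow' (a := 0) (b := t)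
      (r := (-(1 / 2) : ℝ)) (by norm_num)).comp_sub_left t
    simpa using this.symm
  refine h.continuousOn_mul (Continuous.continuousOn ?_)
  have := continuous_J1
  fun_prop

/-- The damped Gaussian `e^{-z²/(4εy) - ay}`. -/
noncomputable def gauss (ε a z y : ℝ) : ℝ := Real.exp (-(z ^ 2 / ε) / (4 * y) - a * y)

/-- The `z`-derivative of `gauss`. -/
noncomputable def gaussDeriv (ε a z y : ℝ) : ℝ := -(z / (2 * ε * y)) * gauss ε a z y

lemma hasDerivAt_gauss (ε a z y : ℝ) :
    HasDerivAt (fun z => gauss ε a z y) (gaussDeriv ε a z y) z := by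
  unfold gaussDeriv gauss
  have := (((((hasDerivAt_id z).pow 2).div_const ε).neg.div_const (4 * y)).sub_const (a * y)).exp
  convert this using 1
  simp only [id, Pi.pow_apply, Pi.neg_apply]
  norm_num
  ring

lemma measurable_gauss (ε a z : ℝ) : Measurable (gauss ε a z) := by
  unfold gauss
  fun_prop

lemma measurable_gaussDeriv (ε a z : ℝ) : Measurable (gaussDeriv ε a z) := by
  unfold gaussDeriv
  have := measurable_gauss ε a z
  fun_prop

lemma gaussDeriv_neg (ε a z y : ℝ) : gaussDeriv ε a (-z) y = -gaussDeriv ε a z y := by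
  unfold gaussDeriv gauss
  rw [neg_sq]
  ring

lemma abs_gauss_le {ε a y : ℝ} (hε : 0 < ε) (ha : 0 < a) (hy : 0 < y) (z : ℝ) :
    |gauss ε a z y| ≤ 1 := by
  unfold gauss
  rw [abs_of_pos (Real.exp_pos _), Real.exp_le_one_iff, neg_div]
  have h1 : 0 ≤ z ^ 2 / ε / (4 * y) := by positivity
  have h2 : 0 ≤ a * y := by positivity
  linarith

lemma abs_gaussDeriv_le {ε a t y z : ℝ} (hε : 0 < ε) (ha : 0 < a) (hy : 0 < y) (hyt : y ≤ t)
    (hz : z ≠ 0) : |gaussDeriv ε a z y| ≤ 16 * ε * t / |z| ^ 3 := by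
  have hz' : 0 < |z| := abs_pos.mpr hz
  -- With `u = z²/(4εy)` this is `e^{-u} ≤ 2/u²`.
  have hg : gauss ε a z y ≤ 32 * ε ^ 2 * y ^ 2 / |z| ^ 4 := by
    have hu : 0 < |z| ^ 2 / (4 * ε * y) := by positivity
    set u := |z| ^ 2 / (4 * ε * y) with hu_def
    have h1 : gauss ε a z y ≤ Real.exp (-u) := by
      unfold gauss
      apply Real.exp_le_exp.mpr
      have e : -(z ^ 2 / ε) / (4 * y) = -u := by
        rw [hu_def, sq_abs]
        field_simp
      rw [e]
      have : 0 < a * y := by positivity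
      linarith
    have h2 : Real.exp (-u) ≤ (u ^ 2 / 2)⁻¹ := by
      rw [Real.exp_neg]
      apply inv_anti₀ (by positivity)
      have := Real.quadratic_le_exp_of_nonneg hu.le
      linarith
    refine (h1.trans h2).trans (le_of_eq ?_)
    rw [hu_def]
    field_simp
    norm_num
  have hpos : 0 < gauss ε a z y := Real.exp_pos _
  unfold gaussDeriv
  rw [abs_mul, abs_neg, abs_div, abs_of_pos hpos, abs_of_pos (show 0 < 2 * ε * y by positivity)]
  calc |z| / (2 * ε * y) * gauss ε a z y
      ≤ |z| / (2 * ε * y) * (32 * ε ^ 2 * y ^ 2 / |z| ^ 4) := by gcongr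
    _ = 16 * ε * y / |z| ^ 3 := by
        field_simp
        norm_num
    _ ≤ 16 * ε * t / |z| ^ 3 := by gcongr

lemma Kfun_eq {ε a b β : ℝ} (hε : 0 < ε) (x : ℝ) {t : ℝ} (ht : 0 < t) :
    Kfun ε a b β x t = 1 / (2 * Real.sqrt (Real.pi * ε)) *
      (gauss ε a x t / Real.sqrt t
        - b * ∫ y in (0:ℝ)..t, gauss ε a x y * memWeight b β t y) := by
  have hsq : (|x| / Real.sqrt ε) ^ 2 = x ^ 2 / ε := by
    rw [div_pow, sq_abs, Real.sq_sqrt hε.le]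
  unfold Kfun
  rw [hsq]
  congr 3
  apply intervalIntegral.integral_congr_uIoo
  intro y hy
  rw [uIoo_of_le ht.le] at hy
  have hty : 0 ≤ t - y := by linarith [hy.2]
  simp only [memWeight, gauss]
  rw [Real.rpow_neg hty, ← Real.sqrt_eq_rpow]
  ring

/-- The `x`-derivative of `K` at `z ≠ 0`, as obtained by differentiating under the integral. -/
noncomputable def dK (ε a b β t z : ℝ) : ℝ :=
  1 / (2 * Real.sqrt (Real.pi * ε)) *
    (gaussDeriv ε a z t / Real.sqrt t
      - b * ∫ y in (0:ℝ)..t, gaussDeriv ε a z y * memWeight b β t y)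

lemma dK_neg (ε a b β t z : ℝ) : dK ε a b β t (-z) = -dK ε a b β t z := by
  unfold dK
  simp only [gaussDeriv_neg, neg_mul, intervalIntegral.integral_neg]
  ring

lemma aestronglyMeasurable_memWeight (b β t : ℝ) :
    AEStronglyMeasurable (memWeight b β t) (volume.restrict (Set.uIoc 0 t)) :=
  (intervalIntegrable_memWeight b β t).def'.aestronglyMeasurable

/-- Locally uniform integrable domination of the differentiated memory integrand. -/
lemma norm_gaussDeriv_mul_le {ε a b β t y z δ : ℝ} (hε : 0 < ε) (ha : 0 < a) (hδ : 0 < δ)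
    (hy : 0 < y) (hyt : y ≤ t) (hz : δ ≤ |z|) :
    ‖gaussDeriv ε a z y * memWeight b β t y‖ ≤ 16 * ε * t / δ ^ 3 * ‖memWeight b β t y‖ := by
  have hz0 : z ≠ 0 := abs_pos.mp (hδ.trans_le hz)
  have ht : 0 < t := hy.trans_le hyt
  rw [norm_mul, Real.norm_eq_abs]
  refine mul_le_mul_of_nonneg_right ((abs_gaussDeriv_le hε ha hy hyt hz0).trans ?_)
    (norm_nonneg _)
  gcongr

lemma eventually_half_le_abs {z : ℝ} (hz : z ≠ 0) : ∀ᶠ x in 𝓝 z, |z| / 2 ≤ |x| := by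
  have hz' : 0 < |z| := abs_pos.mpr hz
  exact (continuous_abs.tendsto z).eventually (eventually_ge_nhds (by linarith))

lemma hasDerivAt_Kfun {ε a b β t z : ℝ} (hε : 0 < ε) (ha : 0 < a) (ht : 0 < t) (hz : z ≠ 0) :
    HasDerivAt (fun x => Kfun ε a b β x t) (dK ε a b β t z) z := by
  have hfun : (fun x => Kfun ε a b β x t) = fun x => 1 / (2 * Real.sqrt (Real.pi * ε)) *
      (gauss ε a x t / Real.sqrt t
        - b * ∫ y in (0:ℝ)..t, gauss ε a x y * memWeight b β t y) :=
    funext fun x => Kfun_eq hε x ht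
  have hz' : 0 < |z| / 2 := half_pos (abs_pos.mpr hz)
  have hW := intervalIntegrable_memWeight b β t
  have hint := (intervalIntegral.hasDerivAt_integral_of_dominated_loc_of_deriv_le
    (μ := volume) (a := 0) (b := t)
    (F := fun x y => gauss ε a x y * memWeight b β t y)
    (F' := fun x y => gaussDeriv ε a x y * memWeight b β t y)
    (bound := fun y => 16 * ε * t / (|z| / 2) ^ 3 * ‖memWeight b β t y‖)
    (eventually_half_le_abs hz)
    (Eventually.of_forall fun x => (measurable_gauss ε a x).aestronglyMeasurable.mul
      (aestronglyMeasurable_memWeight b β t))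
    (hW.norm.mono_fun' ((measurable_gauss ε a z).aestronglyMeasurable.mul
      (aestronglyMeasurable_memWeight b β t)) (by
        refine (ae_restrict_iff' measurableSet_uIoc).mpr (Eventually.of_forall fun y hy => ?_)
        rw [uIoc_of_le ht.le] at hy
        change ‖_ * _‖ ≤ ‖_‖
        rw [norm_mul]
        exact mul_le_of_le_one_left (norm_nonneg _) (abs_gauss_le hε ha hy.1 z)))
    ((measurable_gaussDeriv ε a z).aestronglyMeasurable.mul
      (aestronglyMeasurable_memWeight b β t))
    (Eventually.of_forall fun y hy x hx => by
      rw [uIoc_of_le ht.le] at hy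
      exact norm_gaussDeriv_mul_le hε ha hz' hy.1 hy.2 hx)
    (hW.norm.const_mul _)
    (Eventually.of_forall fun y _ x _ => (hasDerivAt_gauss ε a x y).mul_const _)).2
  rw [hfun]
  exact ((((hasDerivAt_gauss ε a z t).div_const _).sub (hint.const_mul b)).const_mul _)

lemma continuous_gaussDeriv (ε a y : ℝ) : Continuous fun z => gaussDeriv ε a z y := by
  unfold gaussDeriv gauss
  fun_prop

lemma continuousAt_dK {ε a b β t z : ℝ} (hε : 0 < ε) (ha : 0 < a) (ht : 0 < t) (hz : z ≠ 0) :
    ContinuousAt (dK ε a b β t) z := by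
  have hz' : 0 < |z| / 2 := half_pos (abs_pos.mpr hz)
  have hint : ContinuousAt
      (fun z => ∫ y in (0:ℝ)..t, gaussDeriv ε a z y * memWeight b β t y) z := by
    refine intervalIntegral.continuousAt_of_dominated_interval
      (bound := fun y => 16 * ε * t / (|z| / 2) ^ 3 * ‖memWeight b β t y‖) ?_ ?_
      ((intervalIntegrable_memWeight b β t).norm.const_mul _) ?_
    · exact Eventually.of_forall fun x => (measurable_gaussDeriv ε a x).aestronglyMeasurable.mul
        (aestronglyMeasurable_memWeight b β t)
    · filter_upwards [eventually_half_le_abs hz] with x hx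
      refine Eventually.of_forall fun y hy => ?_
      rw [uIoc_of_le ht.le] at hy
      exact norm_gaussDeriv_mul_le hε ha hz' hy.1 hy.2 hx
    · exact Eventually.of_forall fun y _ =>
        ((continuous_gaussDeriv ε a y).mul continuous_const).continuousAt
  unfold dK
  exact continuousAt_const.mul
    (((continuous_gaussDeriv ε a t).continuousAt.div_const _).sub (continuousAt_const.mul hint))

lemma abs_dK_le {ε a t : ℝ} (b β : ℝ) (hε : 0 < ε) (ha : 0 < a) (ht : 0 < t) :
    ∃ C, ∀ δ z : ℝ, 0 < δ → δ ≤ |z| → |dK ε a b β t z| ≤ C / δ ^ 3 := by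
  set I := ∫ y in (0:ℝ)..t, ‖memWeight b β t y‖ with hI
  refine ⟨|1 / (2 * Real.sqrt (Real.pi * ε))| *
    (16 * ε * t / Real.sqrt t + |b| * (16 * ε * t * I)), fun δ z hδ hz => ?_⟩
  have hz0 : z ≠ 0 := abs_pos.mp (hδ.trans_le hz)
  have hst : 0 < Real.sqrt t := Real.sqrt_pos.mpr ht
  have h1 : |gaussDeriv ε a z t / Real.sqrt t| ≤ 16 * ε * t / δ ^ 3 / Real.sqrt t := by
    rw [abs_div, abs_of_pos hst]
    gcongr
    refine (abs_gaussDeriv_le hε ha ht le_rfl hz0).trans ?_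
    gcongr
  have h2 : |∫ y in (0:ℝ)..t, gaussDeriv ε a z y * memWeight b β t y|
      ≤ 16 * ε * t / δ ^ 3 * I := by
    rw [hI, ← intervalIntegral.integral_const_mul]
    exact intervalIntegral.norm_integral_le_of_norm_le ht.le
      (Eventually.of_forall fun y hy => norm_gaussDeriv_mul_le hε ha hδ hy.1 hy.2 hz)
      ((intervalIntegrable_memWeight b β t).norm.const_mul _)
  unfold dK
  rw [abs_mul, mul_div_assoc]
  refine mul_le_mul_of_nonneg_left ?_ (abs_nonneg _)
  refine (abs_sub _ _).trans ?_
  rw [abs_mul b]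
  calc _ ≤ 16 * ε * t / δ ^ 3 / Real.sqrt t + |b| * (16 * ε * t / δ ^ 3 * I) := by gcongr
    _ = _ := by ring

/-- for fixed `t > 0`, the series
`J(x,t) = Σ_{n≥1} [∂ₓK(x+2nL,t) + ∂ₓK(x−2nL,t)]`, i.e. `θ_x − K_x`, tends to `0`
as `x → 0`. -/
theorem J_tendsto_zero (ε a b β L : ℝ)
    (hε : 0 < ε) (ha : 0 < a) (hb : 0 < b) (hβ : 0 < β) (hL : 0 < L)
    (Kx : ℝ → ℝ → ℝ)
    (hKx : ∀ x t : ℝ, Kx x t = deriv (fun y : ℝ => Kfun ε a b β y t) x)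
    (J : ℝ → ℝ → ℝ)
    (hJ : ∀ x t : ℝ, J x t
      = ∑' n : ℕ, (Kx (x + 2 * ((n : ℝ) + 1) * L) t + Kx (x - 2 * ((n : ℝ) + 1) * L) t))
    (t : ℝ) (ht : 0 < t) :
    Filter.Tendsto (fun x : ℝ => J x t) (nhds 0) (nhds 0) := by
  have hK : ∀ z : ℝ, z ≠ 0 → Kx z t = dK ε a b β t z := fun z hz => by
    rw [hKx, (hasDerivAt_Kfun hε ha ht hz).deriv]
  have hKc : ∀ z : ℝ, z ≠ 0 → ContinuousAt (fun x => Kx x t) z := fun z hz => by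
    refine (continuousAt_dK (b := b) (β := β) hε ha ht hz).congr ?_
    filter_upwards [isOpen_ne.mem_nhds hz] with x hx
    exact (hK x hx).symm
  obtain ⟨C, hC⟩ := abs_dK_le b β hε ha ht
  have hpos : ∀ n : ℕ, 0 < 2 * ((n : ℝ) + 1) * L := fun n => by positivity
  simp only [hJ]
  have hzero : ∑' _ : ℕ, (0 : ℝ) = 0 := tsum_zero
  suffices Tendsto (fun x : ℝ => ∑' n : ℕ, (Kx (x + 2 * ((n : ℝ) + 1) * L) t
      + Kx (x - 2 * ((n : ℝ) + 1) * L) t)) (𝓝 0) (𝓝 (∑' _ : ℕ, (0 : ℝ))) by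
    rwa [hzero] at this
  refine tendsto_tsum_of_dominated_convergence
    (bound := fun n : ℕ => C / (((n : ℝ) + 1) * L) ^ 3 + C / (((n : ℝ) + 1) * L) ^ 3) ?_ ?_ ?_
  · have h : Summable fun n : ℕ => C / (((n : ℝ) + 1) * L) ^ 3 := by
      have := ((summable_nat_add_iff 1).mpr
        (Real.summable_one_div_nat_pow.mpr (show 1 < 3 by norm_num))).mul_left (C / L ^ 3)
      refine this.congr fun n => ?_
      push_cast
      rw [mul_pow]
      field_simp
    exact h.add h
  · intro n
    set c := 2 * ((n : ℝ) + 1) * L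
    have hc : c ≠ 0 := (hpos n).ne'
    have h1 : Tendsto (fun x : ℝ => Kx (x + c) t) (𝓝 0) (𝓝 (Kx c t)) :=
      (hKc c hc).tendsto.comp (by
        simpa using (continuous_add_const c).tendsto (0 : ℝ))
    have h2 : Tendsto (fun x : ℝ => Kx (x - c) t) (𝓝 0) (𝓝 (Kx (-c) t)) :=
      (hKc (-c) (neg_ne_zero.mpr hc)).tendsto.comp (by
        simpa using (show Continuous fun x : ℝ => x - c by fun_prop).tendsto (0 : ℝ))
    have h := h1.add h2
    rwa [hK _ hc, hK _ (neg_ne_zero.mpr hc), dK_neg, add_neg_cancel] at h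
  · filter_upwards [Ioo_mem_nhds (neg_lt_zero.mpr hL) hL] with x hx n
    have hnL : 0 < ((n : ℝ) + 1) * L := by positivity
    -- `|x| < L ≤ (n+1)L`, so both arguments stay at distance at least `(n+1)L` from `0`.
    have hLn : L ≤ ((n : ℝ) + 1) * L := le_mul_of_one_le_left hL.le (by simp)
    have h1 : ((n : ℝ) + 1) * L ≤ |x + 2 * ((n : ℝ) + 1) * L| :=
      le_abs.mpr (Or.inl (by linarith [hx.1]))
    have h2 : ((n : ℝ) + 1) * L ≤ |x - 2 * ((n : ℝ) + 1) * L| :=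
      le_abs.mpr (Or.inr (by linarith [hx.2]))
    rw [hK _ (abs_pos.mp (hnL.trans_le h1)), hK _ (abs_pos.mp (hnL.trans_le h2))]
    exact (norm_add_le _ _).trans (add_le_add (hC _ _ hnL h1) (hC _ _ hnL h2))
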